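/- arXiv:2505.00417 — 5 statements merged into one kernel-verified Lean document; each statement's English description precedes it below -/
import Mathlib

section
/- Let a ∈ (0,1), r = √a, and define the surface profile of the Hur–Wheeler zero-gravity exact solution by x(α) := α − 4r·sin α/(1 + 2r·cos α + r²) for α ∈ ℝ. Then the following trichotomy holds: (1) if a < (√2 − 1)² then x'(α) > 0 for every α ∈ ℝ (the profile is a graph, not overhanging); (2) if a = (√2 − 1)² then x'(α) ≥ 0 for every α ∈ ℝ and x'(α₀) = 0 for some α₀ ∈ ℝ (the profile has a vertical tangent but is not overhanging); (3) if a > (√2 − 1)² then x'(α₁) < 0 for some α₁ ∈ ℝ (the profile is overhanging). -/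
/-- The horizontal surface coordinate of the Hur–Wheeler zero-gravity exact solution. -/
noncomputable def hwProfile (a : ℝ) : ℝ → ℝ :=
  fun α => α - 4 * Real.sqrt a * Real.sin α /
    (1 + 2 * Real.sqrt a * Real.cos α + (Real.sqrt a) ^ 2)

/-!
The derivative of the profile is `1 - 6 * a + a ^ 2 + 4 * a * cos α ^ 2` divided by a square. The
numerator is least at `α = π / 2`, where it factors as `(a - (√2 - 1) ^ 2) * (a - (√2 + 1) ^ 2)`,
so the sign of `a - (√2 - 1) ^ 2` decides between the three cases as long as `a < (√2 + 1) ^ 2`.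
-/

section

open Real

theorem one_add_two_mul_cos_add_sq_ne_zero {r : ℝ} (hr : r ^ 2 ≠ 1) (α : ℝ) :
    1 + 2 * r * cos α + r ^ 2 ≠ 0 := by
  intro h
  have hsum : (r + cos α) ^ 2 + sin α ^ 2 = 0 := by
    linear_combination h + sin_sq_add_cos_sq α
  obtain ⟨hr_cos_sq, hsin_sq⟩ := (add_eq_zero_iff_of_nonneg (sq_nonneg _) (sq_nonneg _)).1 hsum
  have hr_cos : r + cos α = 0 := pow_eq_zero_iff two_ne_zero |>.1 hr_cos_sq
  exact hr (by linear_combination (r - cos α) * hr_cos + sin_sq_add_cos_sq α - hsin_sq)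

theorem one_sub_six_mul_add_sq_eq_mul (a : ℝ) :
    1 - 6 * a + a ^ 2 = (a - (√2 - 1) ^ 2) * (a - (√2 + 1) ^ 2) := by
  have h : √2 ^ 2 = (2 : ℝ) := sq_sqrt zero_le_two
  linear_combination (2 * a - √2 ^ 2) * h

theorem sqrt_two_sub_one_sq_lt_one : (√2 - 1) ^ 2 < 1 := by
  nlinarith [sq_sqrt (zero_le_two (α := ℝ)), one_lt_sqrt_two]

theorem one_lt_sqrt_two_add_one_sq : 1 < (√2 + 1) ^ 2 :=
  one_lt_pow₀ (by simp) two_ne_zero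

theorem hasDerivAt_hwProfile {a α : ℝ} (ha : 0 ≤ a) (hα : 1 + 2 * √a * cos α + √a ^ 2 ≠ 0) :
    HasDerivAt (hwProfile a)
      ((1 - 6 * a + a ^ 2 + 4 * a * cos α ^ 2) / (1 + 2 * √a * cos α + √a ^ 2) ^ 2) α := by
  have hnum : HasDerivAt (fun β => 4 * √a * sin β) (4 * √a * cos α) α :=
    (hasDerivAt_sin α).const_mul _
  have hden : HasDerivAt (fun β => 1 + 2 * √a * cos β + √a ^ 2) (2 * √a * -sin α) α :=
    (((hasDerivAt_cos α).const_mul _).const_add _).add_const _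
  refine ((hasDerivAt_id α).sub (hnum.div hden hα)).congr_deriv ?_
  rw [eq_div_iff (pow_ne_zero 2 hα), sub_mul, div_mul_cancel₀ _ (pow_ne_zero 2 hα)]
  have hsqrt : √a ^ 2 = a := sq_sqrt ha
  linear_combination (-8 * √a ^ 2) * sin_sq_add_cos_sq α +
    (√a ^ 2 + a - 6 + 4 * cos α ^ 2) * hsqrt

theorem deriv_hwProfile_pi_div_two {a : ℝ} (ha : 0 ≤ a) :
    deriv (hwProfile a) (π / 2) =
      (a - (√2 - 1) ^ 2) * (a - (√2 + 1) ^ 2) / (1 + a) ^ 2 := by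
  have hden : 1 + 2 * √a * cos (π / 2) + √a ^ 2 = 1 + a := by
    rw [cos_pi_div_two, sq_sqrt ha, mul_zero, add_zero]
  rw [(hasDerivAt_hwProfile ha (by rw [hden]; positivity)).deriv, hden, cos_pi_div_two,
    ← one_sub_six_mul_add_sq_eq_mul]
  ring

theorem deriv_hwProfile {a : ℝ} (ha : 0 ≤ a) (ha1 : a ≠ 1) (α : ℝ) :
    deriv (hwProfile a) α =
      ((a - (√2 - 1) ^ 2) * (a - (√2 + 1) ^ 2) + 4 * a * cos α ^ 2) /
        (1 + 2 * √a * cos α + √a ^ 2) ^ 2 := by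
  have hα := one_add_two_mul_cos_add_sq_ne_zero (by rwa [sq_sqrt ha]) α
  rw [(hasDerivAt_hwProfile ha hα).deriv, one_sub_six_mul_add_sq_eq_mul]

theorem deriv_hwProfile_pos {a : ℝ} (ha : 0 ≤ a) (hcrit : a < (√2 - 1) ^ 2) (α : ℝ) :
    0 < deriv (hwProfile a) α := by
  have ha1 : a < 1 := hcrit.trans sqrt_two_sub_one_sq_lt_one
  have hα := one_add_two_mul_cos_add_sq_ne_zero (by rw [sq_sqrt ha]; exact ha1.ne) α
  have hmul : 0 < (a - (√2 - 1) ^ 2) * (a - (√2 + 1) ^ 2) :=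
    mul_pos_of_neg_of_neg (sub_neg.2 hcrit) (sub_neg.2 (ha1.trans one_lt_sqrt_two_add_one_sq))
  rw [deriv_hwProfile ha ha1.ne]
  positivity

theorem deriv_hwProfile_critical_nonneg (α : ℝ) : 0 ≤ deriv (hwProfile ((√2 - 1) ^ 2)) α := by
  rw [deriv_hwProfile (sq_nonneg _) sqrt_two_sub_one_sq_lt_one.ne, sub_self, zero_mul, zero_add]
  positivity

theorem deriv_hwProfile_pi_div_two_neg {a : ℝ} (hlower : (√2 - 1) ^ 2 < a)
    (hupper : a < (√2 + 1) ^ 2) : deriv (hwProfile a) (π / 2) < 0 := by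
  have ha : 0 ≤ a := (sq_nonneg _).trans hlower.le
  rw [deriv_hwProfile_pi_div_two ha]
  exact div_neg_of_neg_of_pos (mul_neg_of_pos_of_neg (sub_pos.2 hlower) (sub_neg.2 hupper))
    (by positivity)

end

theorem stmt_0_general (a : ℝ) (ha : a ∈ Set.Ico (0 : ℝ) ((√2 + 1) ^ 2)) :
    (a < (√2 - 1) ^ 2 → ∀ α : ℝ, 0 < deriv (hwProfile a) α) ∧
    (a = (√2 - 1) ^ 2 →
      (∀ α : ℝ, 0 ≤ deriv (hwProfile a) α) ∧ ∃ α₀ : ℝ, deriv (hwProfile a) α₀ = 0) ∧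
    ((√2 - 1) ^ 2 < a → ∃ α₁ : ℝ, deriv (hwProfile a) α₁ < 0) := by
  refine ⟨deriv_hwProfile_pos ha.1, ?_,
    fun h => ⟨Real.pi / 2, deriv_hwProfile_pi_div_two_neg h ha.2⟩⟩
  rintro rfl
  exact ⟨deriv_hwProfile_critical_nonneg, Real.pi / 2, by simp [deriv_hwProfile_pi_div_two ha.1]⟩

theorem stmt_0 (a : ℝ) (ha : a ∈ Set.Ioo (0 : ℝ) 1) :
    (a < (Real.sqrt 2 - 1) ^ 2 → ∀ α : ℝ, 0 < deriv (hwProfile a) α) ∧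
    (a = (Real.sqrt 2 - 1) ^ 2 →
      (∀ α : ℝ, 0 ≤ deriv (hwProfile a) α) ∧ ∃ α₀ : ℝ, deriv (hwProfile a) α₀ = 0) ∧
    ((Real.sqrt 2 - 1) ^ 2 < a → ∃ α₁ : ℝ, deriv (hwProfile a) α₁ < 0) :=
  stmt_0_general a ⟨ha.1.le, ha.2.trans one_lt_sqrt_two_add_one_sq⟩
end

section
/- Define, for (G,a) in a sufficiently small neighborhood of (0,0) in ℝ², Φ(G,a) := (1 + Ω(a)c(G,a))·Ω(a) + G − (1 + Ω(a)c(G,a))², where c(G,a) := (−(Ω(a) + G) + √(G² + 2Ω(a)G + 2B(a)Ω(a)²))/Ω(a)². Then Φ(0,0) = 0, Φ is continuously differentiable near (0,0) with ∂_GΦ(0,0) = 1 and ∂_aΦ(0,0) = −2. Consequently there exist ε > 0 and a continuously differentiable function G̃ : (−ε,ε) → ℝ with G̃(0) = 0, Φ(G̃(a), a) = 0 for all |a| < ε, and G̃'(0) = 2; moreover G̃(a) is the unique small solution G of Φ(G,a) = 0 for each |a| < ε. -/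
/-- Dimensionless vorticity constant. -/
noncomputable def Om (a : ℝ) : ℝ := (1 - a) / (1 - 3 * a)

/-- Dimensionless Bernoulli constant. -/
noncomputable def Bc (a : ℝ) : ℝ := (1 / 2) * ((1 + a) / (1 - 3 * a)) ^ 2

/-- The laminar-flow constant (imaginary part of the constant solution d(G,a)). -/
noncomputable def cLam (G a : ℝ) : ℝ :=
  (-(Om a + G) + Real.sqrt (G ^ 2 + 2 * Om a * G + 2 * Bc a * (Om a) ^ 2)) / (Om a) ^ 2

/-- The kernel (first Fourier mode) condition for the linearization at the laminar solution. -/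
noncomputable def Φ (G a : ℝ) : ℝ :=
  (1 + Om a * cLam G a) * Om a + G - (1 + Om a * cLam G a) ^ 2

/-!
Writing `D = G² + 2ΩG + 2BΩ²`, one has `1 + Ωc = (√D - G) / Ω`, so that
`Φ = √D - ((√D - G) / Ω)²`. On each coordinate axis `D` is a perfect square, and `Φ` becomes
rational near the origin: `Φ(G, 0) = G` and `Φ(0, a) = -2a(1 + a) / (1 - 3a)²`. Both partials at
the origin can be read off, and the implicit function theorem gives `G̃'(0) = -(-2) / 1`.
-/

open Metric
open scoped Topology ContDiff

section ImplicitFunction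

variable {𝕜 : Type*} [RCLike 𝕜] {n : ℕ∞ω}

theorem exists_contDiffOn_ball_of_contDiffAt {E F : Type*} [NormedAddCommGroup E]
    [NormedSpace 𝕜 E] [NormedAddCommGroup F] [NormedSpace 𝕜 F] {f : E → F} {x : E}
    (hf : ContDiffAt 𝕜 n f x) (hn : n ≠ ∞) : ∃ ε > 0, ContDiffOn 𝕜 n f (ball x ε) := by
  obtain ⟨ε, hε, hball⟩ := eventually_nhds_iff_ball.1 (hf.eventually hn)
  exact ⟨ε, hε, fun y hy => (hball y hy).contDiffWithinAt⟩

variable {f : 𝕜 × 𝕜 → 𝕜} {x₀ y₀ fx fy : 𝕜}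

theorem exists_implicit_germ_of_hasDerivAt (hf : ContDiffAt 𝕜 n f (x₀, y₀)) (hn : n ≠ 0)
    (hfx : HasDerivAt (fun x => f (x, y₀)) fx x₀) (hfy : HasDerivAt (fun y => f (x₀, y)) fy y₀)
    (hfy₀ : fy ≠ 0) :
    ∃ g : 𝕜 → 𝕜, ContDiffAt 𝕜 n g x₀ ∧ g x₀ = y₀ ∧ HasDerivAt g (-fx / fy) x₀ ∧
      ∀ᶠ v in 𝓝 (x₀, y₀), f v = f (x₀, y₀) ↔ v.2 = g v.1 := by
  have hf' := (hf.differentiableAt hn).hasFDerivAt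
  have hinl : fderiv 𝕜 f (x₀, y₀) (1, 0) = fx :=
    (hf'.comp_hasDerivAt x₀ ((hasDerivAt_id x₀).prodMk (hasDerivAt_const x₀ y₀))).unique hfx
  have hinr : fderiv 𝕜 f (x₀, y₀) ∘L .inr 𝕜 𝕜 𝕜
      = ContinuousLinearEquiv.unitsEquivAut 𝕜 (Units.mk0 fy hfy₀) := by
    ext
    simpa using
      (hf'.comp_hasDerivAt y₀ ((hasDerivAt_const y₀ x₀).prodMk (hasDerivAt_id y₀))).unique hfy
  have hinv : (fderiv 𝕜 f (x₀, y₀) ∘L .inr 𝕜 𝕜 𝕜).IsInvertible := ⟨_, hinr.symm⟩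
  refine ⟨hf.implicitFunction hn hinv, hf.contDiffAt_implicitFunction hn hinv,
    hf.implicitFunction_apply_self hn hinv, ?_, ?_⟩
  · refine (hf.hasStrictFDerivAt_implicitFunction hn hinv).hasFDerivAt.hasDerivAt.congr_deriv ?_
    rw [hinr, ContinuousLinearMap.inverse_equiv]
    simp [hinl, div_eq_mul_inv]
  · filter_upwards [hf.eventually_apply_eq_iff_implicitFunction hn hinv] with v hv
    rw [hv, eq_comm]

theorem exists_implicit_on_ball_of_hasDerivAt (hf : ContDiffAt 𝕜 n f (x₀, y₀)) (hn : n ≠ 0)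
    (hn' : n ≠ ∞) (hfx : HasDerivAt (fun x => f (x, y₀)) fx x₀)
    (hfy : HasDerivAt (fun y => f (x₀, y)) fy y₀) (hfy₀ : fy ≠ 0) :
    ∃ ε > 0, ∃ g : 𝕜 → 𝕜, ContDiffOn 𝕜 n g (ball x₀ ε) ∧ g x₀ = y₀ ∧
      (∀ x ∈ ball x₀ ε, f (x, g x) = f (x₀, y₀)) ∧ HasDerivAt g (-fx / fy) x₀ ∧
      ∃ δ > 0, ∀ x ∈ ball x₀ ε, ∀ y ∈ ball y₀ δ, f (x, y) = f (x₀, y₀) ↔ y = g x := by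
  obtain ⟨g, hg, rfl, hg', hgraph⟩ := exists_implicit_germ_of_hasDerivAt hf hn hfx hfy hfy₀
  have hsol : ∀ᶠ x in 𝓝 x₀, f (x, g x) = f (x₀, g x₀) :=
    ((continuousAt_id.prodMk hg.continuousAt).eventually hgraph).mono fun _ hx => hx.2 rfl
  obtain ⟨ε₁, hε₁, hgε₁⟩ := exists_contDiffOn_ball_of_contDiffAt hg hn'
  obtain ⟨ε₂, hε₂, hsolε₂⟩ := eventually_nhds_iff_ball.1 hsol
  obtain ⟨δ, hδ, hgraphδ⟩ := eventually_nhds_iff_ball.1 hgraph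
  simp only [← ball_prod_same] at hgraphδ
  refine ⟨min (min ε₁ ε₂) δ, by positivity, g, hgε₁.mono (ball_subset_ball (by simp)), rfl,
    fun x hx => hsolε₂ x (ball_subset_ball (by simp) hx), hg', δ, hδ,
    fun x hx y hy => hgraphδ (x, y) ⟨ball_subset_ball (by simp) hx, hy⟩⟩

end ImplicitFunction

/-- One quarter of the discriminant of the Bernoulli equation `(1 + Ωc)² + 2Gc = 2B`, a quadratic
in `c` whose larger root is `cLam G a`. -/
noncomputable def laminarDiscr (G a : ℝ) : ℝ := G ^ 2 + 2 * Om a * G + 2 * Bc a * Om a ^ 2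

section LaminarDiscr

variable {G a : ℝ}

theorem laminarDiscr_zero_right (G : ℝ) : laminarDiscr G 0 = (G + 1) ^ 2 := by
  norm_num [laminarDiscr, Om, Bc]
  ring

theorem laminarDiscr_zero_left (a : ℝ) :
    laminarDiscr 0 a = ((1 + a) / (1 - 3 * a) * Om a) ^ 2 := by
  rw [laminarDiscr, Bc]
  ring

theorem Φ_eq_sqrt_laminarDiscr (hΩ : Om a ≠ 0) :
    Φ G a = √(laminarDiscr G a) - ((√(laminarDiscr G a) - G) / Om a) ^ 2 := by
  rw [Φ, cLam, ← laminarDiscr]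
  field_simp
  ring

theorem Φ_zero_right (hG : -1 ≤ G) : Φ G 0 = G := by
  have hΩ : Om 0 = 1 := by norm_num [Om]
  rw [Φ_eq_sqrt_laminarDiscr (by simp [hΩ]), laminarDiscr_zero_right,
    Real.sqrt_sq (by linarith), hΩ]
  ring

theorem Φ_zero_left (ha : -1 ≤ a) (ha' : a < 1 / 3) :
    Φ 0 a = -2 * a * (1 + a) / (1 - 3 * a) ^ 2 := by
  have hden : 0 < 1 - 3 * a := by linarith
  have hΩ : 0 < Om a := div_pos (by linarith) hden
  have hβ : 0 ≤ (1 + a) / (1 - 3 * a) := div_nonneg (by linarith) hden.le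
  rw [Φ_eq_sqrt_laminarDiscr hΩ.ne', laminarDiscr_zero_left, Real.sqrt_sq (by positivity),
    sub_zero, mul_div_cancel_right₀ _ hΩ.ne', Om]
  field_simp
  ring

end LaminarDiscr

section Derivatives

variable {G a : ℝ}

theorem hasDerivAt_Φ_zero_right (hG : -1 < G) : HasDerivAt (fun G => Φ G 0) 1 G :=
  (hasDerivAt_id G).congr_of_eventuallyEq <|
    (eventually_gt_nhds hG).mono fun _ hG => Φ_zero_right hG.le

theorem hasDerivAt_Φ_zero_left (ha : -1 < a) (ha' : a < 1 / 3) :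
    HasDerivAt (fun a => Φ 0 a) (-(2 + 10 * a) / (1 - 3 * a) ^ 3) a := by
  have hden : 1 - 3 * a ≠ 0 := by linarith
  have hnum' : HasDerivAt (fun a : ℝ => -2 * a * (1 + a)) (-2 * (1 + a) + -2 * a) a :=
    (((hasDerivAt_id a).const_mul (-2)).mul ((hasDerivAt_id a).const_add 1)).congr_deriv (by simp)
  have hden' : HasDerivAt (fun a : ℝ => (1 - 3 * a) ^ 2) (-6 * (1 - 3 * a)) a :=
    ((((hasDerivAt_id a).const_mul 3).const_sub 1).pow 2).congr_deriv (by simp; ring)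
  have hrat : HasDerivAt (fun a : ℝ => -2 * a * (1 + a) / (1 - 3 * a) ^ 2)
      (-(2 + 10 * a) / (1 - 3 * a) ^ 3) a :=
    (hnum'.div hden' (pow_ne_zero 2 hden)).congr_deriv (by field_simp; ring)
  refine hrat.congr_of_eventuallyEq ?_
  filter_upwards [Ioo_mem_nhds ha ha'] with b hb using Φ_zero_left hb.1.le hb.2

end Derivatives

section Smoothness

variable {n : ℕ∞ω} {G a : ℝ}

theorem contDiffAt_Om (ha : 1 - 3 * a ≠ 0) : ContDiffAt ℝ n Om a := by
  unfold Om
  fun_prop (disch := assumption)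

theorem contDiffAt_Bc (ha : 1 - 3 * a ≠ 0) : ContDiffAt ℝ n Bc a := by
  unfold Bc
  fun_prop (disch := assumption)

theorem contDiffAt_Φ (hΩ : Om a ≠ 0) (hD : laminarDiscr G a ≠ 0) :
    ContDiffAt ℝ n (fun p : ℝ × ℝ => Φ p.1 p.2) (G, a) := by
  -- `Om` vanishes at `1 / 3` by the convention `x / 0 = 0`, so `hΩ` excludes the pole.
  have ha : 1 - 3 * a ≠ 0 := (div_ne_zero_iff.1 hΩ).2
  have hOm : ContDiffAt ℝ n (fun p : ℝ × ℝ => Om p.2) (G, a) :=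
    ContDiffAt.comp (g := Om) (G, a) (contDiffAt_Om ha) contDiffAt_snd
  have hBc : ContDiffAt ℝ n (fun p : ℝ × ℝ => Bc p.2) (G, a) :=
    ContDiffAt.comp (g := Bc) (G, a) (contDiffAt_Bc ha) contDiffAt_snd
  have hsqrt : ContDiffAt ℝ n (fun p : ℝ × ℝ => √(laminarDiscr p.1 p.2)) (G, a) :=
    ContDiffAt.sqrt (by unfold laminarDiscr; fun_prop) hD
  have hcLam : ContDiffAt ℝ n (fun p : ℝ × ℝ => cLam p.1 p.2) (G, a) :=
    ((hOm.add contDiffAt_fst).neg.add hsqrt).div (hOm.pow 2) (pow_ne_zero 2 hΩ)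
  unfold Φ
  fun_prop

theorem contDiffAt_Φ_zero : ContDiffAt ℝ n (fun p : ℝ × ℝ => Φ p.1 p.2) (0, 0) :=
  contDiffAt_Φ (by norm_num [Om]) (by norm_num [laminarDiscr_zero_right])

end Smoothness

theorem stmt_5 :
    Φ 0 0 = 0 ∧
    (∃ ε₀ > (0 : ℝ),
        ContDiffOn ℝ 1 (fun p : ℝ × ℝ => Φ p.1 p.2) (Metric.ball ((0 : ℝ), (0 : ℝ)) ε₀)) ∧
    deriv (fun G => Φ G 0) 0 = 1 ∧
    deriv (fun a => Φ 0 a) 0 = -2 ∧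
    ∃ ε > (0 : ℝ), ∃ Gt : ℝ → ℝ,
      ContDiffOn ℝ 1 Gt (Set.Ioo (-ε) ε) ∧
      Gt 0 = 0 ∧
      (∀ a : ℝ, |a| < ε → Φ (Gt a) a = 0) ∧
      deriv Gt 0 = 2 ∧
      ∃ δ > (0 : ℝ), ∀ a : ℝ, |a| < ε → ∀ G : ℝ, |G| < δ → (Φ G a = 0 ↔ G = Gt a) := by
  have hΦ : Φ 0 0 = 0 := Φ_zero_right (by norm_num)
  have hΦG : HasDerivAt (fun G => Φ G 0) 1 0 := hasDerivAt_Φ_zero_right (by norm_num)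
  have hΦa : HasDerivAt (fun a => Φ 0 a) (-2) 0 := by
    simpa using hasDerivAt_Φ_zero_left (a := 0) (by norm_num) (by norm_num)
  have hΦswap : ContDiffAt ℝ 1 (fun q : ℝ × ℝ => Φ q.2 q.1) (0, 0) :=
    ContDiffAt.comp (f := Prod.swap) (0, 0) contDiffAt_Φ_zero
      (contDiffAt_snd.prodMk contDiffAt_fst)
  obtain ⟨ε, hε, g, hg, hg₀, hsol, hg', δ, hδ, huniq⟩ :=
    exists_implicit_on_ball_of_hasDerivAt hΦswap one_ne_zero (by simp) hΦa hΦG one_ne_zero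
  simp only [hΦ, mem_ball_zero_iff, Real.norm_eq_abs] at hsol huniq
  refine ⟨hΦ, exists_contDiffOn_ball_of_contDiffAt contDiffAt_Φ_zero (by simp), hΦG.deriv,
    hΦa.deriv, ε, hε, g, ?_, hg₀, hsol, by simpa using hg'.deriv, δ, hδ, huniq⟩
  simpa [Real.ball_eq_Ioo] using hg
end

section
/- Let U ⊆ ℂ be an open set containing (α₀, 0), let z = x + iy : U → ℂ be holomorphic, ψ : U → ℝ of class C², and G, B real constants. Assume: (a) ψ(α,0) = 0 for all α with (α,0) ∈ U; (b) ψ_β(α,0) = √(2(B − G·y(α,0))·(x_α(α,0)² + y_α(α,0)²)) for all α with (α,0) ∈ U; (c) x_α(α₀,0) = 0; (d) y_α(α₀,0) > 0; (e) B − G·y(α₀,0) > 0. Define F := ψ_α y_α + ψ_β x_α. Then ∂_β F(α₀, 0) = −G·y_α(α₀,0)³ / √(2(B − G·y(α₀,0))). -/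
/-- The numerator `ψ_α y_α + ψ_β x_α` of the horizontal fluid velocity, in conformal
coordinates, where `ℂ` is identified with `ℝ²` via `ζ = α + iβ`, `x = Re z`, `y = Im z`. -/
noncomputable def FnumC (z : ℂ → ℂ) (ψ : ℂ → ℝ) : ℂ → ℝ := fun ζ =>
  fderiv ℝ ψ ζ 1 * fderiv ℝ (fun w => (z w).im) ζ 1
    + fderiv ℝ ψ ζ Complex.I * fderiv ℝ (fun w => (z w).re) ζ 1

/-!
Work with the square of Bernoulli's law, `ψ_β² = 2 (B - G y) (x_α² + y_α²)` on `β = 0`, which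
can be differentiated along the surface without dividing by the square root. At a point where the
surface is vertical, `x_α = 0`, and `ψ_α = 0` because the surface is a streamline; so, by the
Cauchy–Riemann equation `x_αβ = -y_αα`, one has `∂_β F = ψ_αβ y_α - ψ_β y_αα`, while the
differentiated law reads `ψ_β ψ_αβ = -G y_α³ + 2 (B - G y) y_α y_αα`. Multiplying the former by
`ψ_β` and using `ψ_β² = 2 (B - G y) y_α²`, the terms in `y_αα` cancel and `ψ_β ∂_β F = -G y_α⁴`
is left.
-/

open Complex Filter Topology

section RealDerivatives

variable {E F : Type*} [NormedAddCommGroup E] [NormedSpace ℝ E]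
  [NormedAddCommGroup F] [NormedSpace ℂ F]

theorem fderiv_clm_comp_apply (L : F →L[ℝ] E) {f : ℂ → F} {ζ : ℂ} (hf : DifferentiableAt ℂ f ζ)
    (v : ℂ) : fderiv ℝ (fun w => L (f w)) ζ v = L (v • deriv f ζ) := by
  have hLf := L.hasFDerivAt.comp ζ (hf.hasDerivAt.hasFDerivAt.restrictScalars ℝ)
  simpa [Function.comp_def] using DFunLike.congr_fun hLf.fderiv v

theorem fderiv_re_apply {f : ℂ → ℂ} {ζ : ℂ} (hf : DifferentiableAt ℂ f ζ) (v : ℂ) :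
    fderiv ℝ (fun w => (f w).re) ζ v = (v * deriv f ζ).re :=
  fderiv_clm_comp_apply reCLM hf v

theorem fderiv_im_apply {f : ℂ → ℂ} {ζ : ℂ} (hf : DifferentiableAt ℂ f ζ) (v : ℂ) :
    fderiv ℝ (fun w => (f w).im) ζ v = (v * deriv f ζ).im :=
  fderiv_clm_comp_apply imCLM hf v

theorem hasDerivAt_comp_ofReal {f : ℂ → E} {α : ℝ} (hf : DifferentiableAt ℝ f α) :
    HasDerivAt (fun t : ℝ => f t) (fderiv ℝ f α 1) α := by
  simpa [Function.comp_def] using hf.hasFDerivAt.comp_hasDerivAt α ofRealCLM.hasDerivAt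

theorem hasDerivAt_im_comp_ofReal {f : ℂ → ℂ} {α : ℝ} (hf : DifferentiableAt ℂ f α) :
    HasDerivAt (fun t : ℝ => (f t).im) (deriv f α).im α := by
  rw [← one_mul (deriv f α), ← fderiv_im_apply hf]
  exact hasDerivAt_comp_ofReal (f := fun w => (f w).im) (by fun_prop)

theorem fderiv_one_eq_zero_of_eventually_ofReal {f : ℂ → E} {α : ℝ} (hf : DifferentiableAt ℝ f α)
    (hf₀ : ∀ᶠ t : ℝ in 𝓝 α, f t = 0) : fderiv ℝ f α 1 = 0 :=
  (hasDerivAt_comp_ofReal hf).unique ((hasDerivAt_const α 0).congr_of_eventuallyEq hf₀)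

end RealDerivatives

section SecondDerivative

variable {𝕜 E F : Type*} [NontriviallyNormedField 𝕜] [NormedAddCommGroup E] [NormedSpace 𝕜 E]
  [NormedAddCommGroup F] [NormedSpace 𝕜 F] {f : E → F} {p : E}

theorem differentiableAt_fderiv_of_contDiffAt (hf : ContDiffAt 𝕜 2 f p) :
    DifferentiableAt 𝕜 (fderiv 𝕜 f) p :=
  (hf.fderiv_right (m := 1) (by norm_num)).differentiableAt one_ne_zero

theorem fderiv_fderiv_apply_comm [IsRCLikeNormedField 𝕜] (hf : ContDiffAt 𝕜 2 f p) (u v : E) :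
    fderiv 𝕜 (fun ζ => fderiv 𝕜 f ζ u) p v = fderiv 𝕜 (fun ζ => fderiv 𝕜 f ζ v) p u := by
  have happly (u v : E) :
      fderiv 𝕜 (fun ζ => fderiv 𝕜 f ζ u) p v = fderiv 𝕜 (fderiv 𝕜 f) p v u := by
    simp [fderiv_clm_apply (differentiableAt_fderiv_of_contDiffAt hf)]
  rw [happly, happly, hf.isSymmSndFDerivAt (by simp) v u]

end SecondDerivative

section FreeSurface

variable {z : ℂ → ℂ} {ψ : ℂ → ℝ} {G B : ℝ} {p : ℂ} {α₀ : ℝ}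

theorem FnumC_eventuallyEq (hz : AnalyticAt ℂ z p) :
    FnumC z ψ =ᶠ[𝓝 p] fun ζ =>
      fderiv ℝ ψ ζ 1 * (deriv z ζ).im + fderiv ℝ ψ ζ I * (deriv z ζ).re := by
  filter_upwards [hz.eventually_analyticAt] with ζ hζ
  simp only [FnumC, fderiv_re_apply hζ.differentiableAt, fderiv_im_apply hζ.differentiableAt,
    one_mul]

theorem fderiv_FnumC_apply (hz : AnalyticAt ℂ z p) (hψ : ContDiffAt ℝ 2 ψ p) (v : ℂ) :
    fderiv ℝ (FnumC z ψ) p v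
      = fderiv ℝ (fun ζ => fderiv ℝ ψ ζ 1) p v * (deriv z p).im
        + fderiv ℝ ψ p 1 * (v * deriv (deriv z) p).im
        + fderiv ℝ (fun ζ => fderiv ℝ ψ ζ I) p v * (deriv z p).re
        + fderiv ℝ ψ p I * (v * deriv (deriv z) p).re := by
  have hz' := hz.deriv.differentiableAt
  have hdψ := differentiableAt_fderiv_of_contDiffAt hψ
  rw [(FnumC_eventuallyEq hz).fderiv_eq, fderiv_fun_add (by fun_prop) (by fun_prop),
    fderiv_fun_mul (by fun_prop) (by fun_prop), fderiv_fun_mul (by fun_prop) (by fun_prop)]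
  simp only [add_apply, smul_apply, smul_eq_mul, fderiv_re_apply hz', fderiv_im_apply hz']
  ring

theorem fderiv_FnumC_I_of_vertical (hz : AnalyticAt ℂ z p) (hψ : ContDiffAt ℝ 2 ψ p)
    (hψα : fderiv ℝ ψ p 1 = 0) (hx : (deriv z p).re = 0) :
    fderiv ℝ (FnumC z ψ) p I
      = fderiv ℝ (fun ζ => fderiv ℝ ψ ζ I) p 1 * (deriv z p).im
        - fderiv ℝ ψ p I * (deriv (deriv z) p).im := by
  rw [fderiv_FnumC_apply hz hψ, fderiv_fderiv_apply_comm hψ 1 I, hψα, hx, I_mul_re]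
  ring

theorem eventually_bernoulli_sq_of_sqrt {q : ℝ → ℝ} (hz : AnalyticAt ℂ z α₀)
    (hB : 0 < B - G * (z α₀).im)
    (hq : ∀ᶠ α : ℝ in 𝓝 α₀, q α
      = √(2 * (B - G * (z α).im) * (fderiv ℝ (fun w => (z w).re) (α : ℂ) 1 ^ 2
          + fderiv ℝ (fun w => (z w).im) (α : ℂ) 1 ^ 2))) :
    ∀ᶠ α : ℝ in 𝓝 α₀, q α ^ 2
      = 2 * (B - G * (z α).im) * ((deriv z α).re ^ 2 + (deriv z α).im ^ 2) := by
  have hcont : ContinuousAt (fun α : ℝ => B - G * (z α).im) α₀ :=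
    (((hasDerivAt_im_comp_ofReal hz.differentiableAt).const_mul G).const_sub B).continuousAt
  filter_upwards [hq, hcont.eventually_const_lt hB,
    continuous_ofReal.continuousAt.eventually hz.eventually_analyticAt] with α hqα hBα hzα
  rw [hqα, Real.sq_sqrt (by positivity), fderiv_re_apply hzα.differentiableAt,
    fderiv_im_apply hzα.differentiableAt, one_mul]

theorem mul_deriv_of_bernoulli {q : ℝ → ℝ} {q' : ℝ} (hz : AnalyticAt ℂ z α₀)
    (hq : HasDerivAt q q' α₀)
    (hbernoulli : ∀ᶠ α : ℝ in 𝓝 α₀, q α ^ 2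
      = 2 * (B - G * (z α).im) * ((deriv z α).re ^ 2 + (deriv z α).im ^ 2)) :
    q α₀ * q'
      = -G * (deriv z α₀).im * ((deriv z α₀).re ^ 2 + (deriv z α₀).im ^ 2)
        + 2 * (B - G * (z α₀).im) * ((deriv z α₀).re * (deriv (deriv z) α₀).re
          + (deriv z α₀).im * (deriv (deriv z) α₀).im) := by
  have hz' := hz.deriv.differentiableAt
  have hrhs := (((hasDerivAt_im_comp_ofReal hz.differentiableAt).const_mul G).const_sub B
    |>.const_mul 2).fun_mul
      ((hz'.hasDerivAt.real_of_complex.fun_pow 2).fun_add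
        ((hasDerivAt_im_comp_ofReal hz').fun_pow 2))
  have heq := (hq.fun_pow 2).unique (hrhs.congr_of_eventuallyEq hbernoulli)
  linear_combination heq / 2

theorem fderiv_I_mul_fderiv_FnumC_I_of_bernoulli (hz : AnalyticAt ℂ z α₀)
    (hψ : ContDiffAt ℝ 2 ψ α₀) (hψα : fderiv ℝ ψ α₀ 1 = 0)
    (hbernoulli : ∀ᶠ α : ℝ in 𝓝 α₀, fderiv ℝ ψ α I ^ 2
      = 2 * (B - G * (z α).im) * ((deriv z α).re ^ 2 + (deriv z α).im ^ 2))
    (hx : (deriv z α₀).re = 0) :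
    fderiv ℝ ψ α₀ I * fderiv ℝ (FnumC z ψ) α₀ I = -G * (deriv z α₀).im ^ 4 := by
  have hsq := hbernoulli.self_of_nhds
  have hdψ := differentiableAt_fderiv_of_contDiffAt hψ
  have hderiv := mul_deriv_of_bernoulli hz
    (hasDerivAt_comp_ofReal (f := fun ζ => fderiv ℝ ψ ζ I) (by fun_prop)) hbernoulli
  rw [hx] at hsq hderiv
  rw [fderiv_FnumC_I_of_vertical hz hψ hψα hx]
  linear_combination (deriv z α₀).im * hderiv - (deriv (deriv z) α₀).im * hsq

end FreeSurface

theorem stmt_10_general {α₀ : ℝ} {z : ℂ → ℂ} (hz : AnalyticAt ℂ z α₀)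
    {ψ : ℂ → ℝ} (hψ : ContDiffAt ℝ 2 ψ α₀) {G B : ℝ}
    (ha : ∀ᶠ α : ℝ in 𝓝 α₀, ψ α = 0)
    (hb : ∀ᶠ α : ℝ in 𝓝 α₀, fderiv ℝ ψ α I
      = √(2 * (B - G * (z α).im) * (fderiv ℝ (fun w => (z w).re) (α : ℂ) 1 ^ 2
          + fderiv ℝ (fun w => (z w).im) (α : ℂ) 1 ^ 2)))
    (hc : fderiv ℝ (fun w => (z w).re) (α₀ : ℂ) 1 = 0)
    (he : 0 < B - G * (z α₀).im) :
    fderiv ℝ (FnumC z ψ) α₀ I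
      = -G * |fderiv ℝ (fun w => (z w).im) (α₀ : ℂ) 1| ^ 3 / √(2 * (B - G * (z α₀).im)) := by
  have hψα : fderiv ℝ ψ α₀ 1 = 0 :=
    fderiv_one_eq_zero_of_eventually_ofReal (hψ.differentiableAt two_ne_zero) ha
  have hψβ : fderiv ℝ ψ α₀ I
      = √(2 * (B - G * (z α₀).im)) * |fderiv ℝ (fun w => (z w).im) (α₀ : ℂ) 1| := by
    rw [hb.self_of_nhds, hc, zero_pow two_ne_zero, zero_add, Real.sqrt_mul (by positivity),
      Real.sqrt_sq_eq_abs]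
  have hbernoulli := eventually_bernoulli_sq_of_sqrt hz he hb
  rw [fderiv_re_apply hz.differentiableAt, one_mul] at hc
  rw [fderiv_im_apply hz.differentiableAt, one_mul] at hψβ ⊢
  rcases eq_or_ne (deriv z α₀).im 0 with hy | hy
  · simp [fderiv_FnumC_I_of_vertical hz hψ hψα hc, hψβ, hy]
  · have hprod := fderiv_I_mul_fderiv_FnumC_I_of_bernoulli hz hψ hψα hbernoulli hc
    rw [hψβ, ← Even.pow_abs (by decide : Even 4)] at hprod
    rw [eq_div_iff (by positivity)]
    refine mul_left_cancel₀ (abs_ne_zero.mpr hy) ?_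
    linear_combination hprod

theorem stmt_10 (U : Set ℂ) (hU : IsOpen U) (α₀ : ℝ) (hα₀ : (α₀ : ℂ) ∈ U)
    (z : ℂ → ℂ) (hz : DifferentiableOn ℂ z U)
    (ψ : ℂ → ℝ) (hψ : ContDiffOn ℝ 2 ψ U) (G B : ℝ)
    (ha : ∀ α : ℝ, (α : ℂ) ∈ U → ψ (α : ℂ) = 0)
    (hb : ∀ α : ℝ, (α : ℂ) ∈ U →
      fderiv ℝ ψ (α : ℂ) Complex.I
        = Real.sqrt (2 * (B - G * (z (α : ℂ)).im) *
            ((fderiv ℝ (fun w => (z w).re) (α : ℂ) 1) ^ 2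
              + (fderiv ℝ (fun w => (z w).im) (α : ℂ) 1) ^ 2)))
    (hc : fderiv ℝ (fun w => (z w).re) (α₀ : ℂ) 1 = 0)
    (hd : 0 < fderiv ℝ (fun w => (z w).im) (α₀ : ℂ) 1)
    (he : 0 < B - G * (z (α₀ : ℂ)).im) :
    fderiv ℝ (FnumC z ψ) (α₀ : ℂ) Complex.I
      = -G * (fderiv ℝ (fun w => (z w).im) (α₀ : ℂ) 1) ^ 3
          / Real.sqrt (2 * (B - G * (z (α₀ : ℂ)).im)) := by
  have hU_nhds : U ∈ 𝓝 (α₀ : ℂ) := hU.mem_nhds hα₀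
  have hmem : ∀ᶠ α : ℝ in 𝓝 α₀, (α : ℂ) ∈ U := continuous_ofReal.continuousAt.eventually hU_nhds
  simpa only [abs_of_pos hd] using stmt_10_general (hz.analyticAt hU_nhds)
    (hψ.contDiffAt hU_nhds) (hmem.mono ha) (hmem.mono hb) hc he
end

section
/- Let k ≥ 2 be an integer, p = (α₀, β₀) ∈ ℝ², and let F : ℝ² → ℝ be of class C^k on a neighborhood of p. Assume F(p) = 0, ∂_β F(p) ≠ 0, ∂_α^j F(p) = 0 for all 1 ≤ j ≤ k − 2, and ∂_α^{k−1} F(p) ≠ 0. Then there exist ε > 0 and a C^k function h : (α₀ − ε, α₀ + ε) → ℝ with h(α₀) = β₀ such that for all (α, β) with |α − α₀| < ε and |β − β₀| < ε one has F(α, β) = 0 if and only if β = h(α); moreover (h(α) − β₀)/(α − α₀)^{k−1} → −∂_α^{k−1}F(p) / ((k−1)!·∂_β F(p)) as α → α₀. -/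
/-!
The zero set near `(α₀, β₀)` is the graph of the implicit function `h`. Strict differentiability
of `F` applied to the pair `(α, h α)`, `(α, β₀)`, at which `F` takes the values `0` and
`F (α, β₀)`, gives `h α - β₀ ~ -(∂_β F)⁻¹ F (α, β₀)`. The leading Taylor term of the slice
`α ↦ F (α, β₀)` then determines the leading term of `h α - β₀`.
-/

open Filter Topology Asymptotics Metric
open scoped ContDiff Nat

section Taylor

variable {E : Type*} [NormedAddCommGroup E] [NormedSpace ℝ E] {f : ℝ → E} {a : ℝ} {n : ℕ}

theorem taylorWithinEval_eq_of_iteratedDeriv_eq_zero {s : Set ℝ} (hs : IsOpen s) (ha : a ∈ s)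
    (hzero : ∀ j < n, iteratedDeriv j f a = 0) (x : ℝ) :
    taylorWithinEval f n s a x = ((n ! : ℝ)⁻¹ * (x - a) ^ n) • iteratedDeriv n f a := by
  have hlower : ∀ j ∈ Finset.range n,
      ((j ! : ℝ)⁻¹ * (x - a) ^ j) • iteratedDerivWithin j f s a = 0 := fun j hj => by
    rw [iteratedDerivWithin_of_isOpen hs ha, hzero j (Finset.mem_range.mp hj), smul_zero]
  rw [taylor_within_apply, Finset.sum_range_succ, Finset.sum_eq_zero hlower, zero_add,
    iteratedDerivWithin_of_isOpen hs ha]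

theorem tendsto_inv_pow_smul_of_iteratedDeriv_eq_zero (hf : ContDiffAt ℝ n f a)
    (hzero : ∀ j < n, iteratedDeriv j f a = 0) :
    Tendsto (fun x => ((x - a) ^ n)⁻¹ • f x) (𝓝[≠] a)
      (𝓝 ((n ! : ℝ)⁻¹ • iteratedDeriv n f a)) := by
  obtain ⟨r, hr, hball⟩ := eventually_nhds_iff_ball.mp (hf.eventually (by simp))
  have ha : a ∈ ball a r := mem_ball_self hr
  have hremainder := taylor_tendsto (convex_ball a r) ha
    fun x hx => (hball x hx).contDiffWithinAt
  rw [isOpen_ball.nhdsWithin_eq ha] at hremainder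
  have hlim := (hremainder.mono_left (nhdsWithin_le_nhds (s := {a}ᶜ))).add_const
    ((n ! : ℝ)⁻¹ • iteratedDeriv n f a)
  rw [zero_add] at hlim
  refine hlim.congr' ?_
  filter_upwards [self_mem_nhdsWithin] with x hx
  have hpow : (x - a) ^ n ≠ 0 := pow_ne_zero n (sub_ne_zero.mpr hx)
  rw [taylorWithinEval_eq_of_iteratedDeriv_eq_zero isOpen_ball ha hzero, mul_smul,
    smul_comm, smul_sub, inv_smul_smul₀ hpow, sub_add_cancel]

end Taylor

section PartialDerivative

variable {ι 𝕜 X E G : Type*} [NontriviallyNormedField 𝕜]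
  [NormedAddCommGroup X] [NormedSpace 𝕜 X] [NormedAddCommGroup E] [NormedSpace 𝕜 E]
  [NormedAddCommGroup G] [NormedSpace 𝕜 G]
  {F : X × E → G} {F' : X × E →L[𝕜] G} {a : X} {b : E}
  {l : Filter ι} {x : ι → X} {y z : ι → E}

theorem isLittleO_sub_sub_inr_of_hasStrictFDerivAt (hF : HasStrictFDerivAt F F' (a, b))
    (hx : Tendsto x l (𝓝 a)) (hy : Tendsto y l (𝓝 b)) (hz : Tendsto z l (𝓝 b)) :
    (fun i => F (x i, y i) - F (x i, z i) - (F' ∘L .inr 𝕜 X E) (y i - z i))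
      =o[l] fun i => y i - z i := by
  have hpair : Tendsto (fun i => ((x i, y i), (x i, z i))) l (𝓝 ((a, b), (a, b))) :=
    (hx.prodMk_nhds hy).prodMk_nhds (hx.prodMk_nhds hz)
  have hdiff : ∀ i, (x i, y i) - (x i, z i) = ContinuousLinearMap.inr 𝕜 X E (y i - z i) := by
    simp
  have hlittle := hF.isLittleO.comp_tendsto hpair
  simp only [Function.comp_def, hdiff] at hlittle
  exact hlittle.trans_isBigO (ContinuousLinearMap.isBigO_comp _ _ l)

theorem isEquivalent_inverse_sub_of_hasStrictFDerivAt (hF : HasStrictFDerivAt F F' (a, b))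
    (hinv : (F' ∘L .inr 𝕜 X E).IsInvertible)
    (hx : Tendsto x l (𝓝 a)) (hy : Tendsto y l (𝓝 b)) (hz : Tendsto z l (𝓝 b)) :
    (fun i => y i - z i) ~[l]
      fun i => (F' ∘L .inr 𝕜 X E).inverse (F (x i, y i) - F (x i, z i)) := by
  refine IsEquivalent.symm (((ContinuousLinearMap.isBigO_comp (F' ∘L .inr 𝕜 X E).inverse _ l
    ).trans_isLittleO (isLittleO_sub_sub_inr_of_hasStrictFDerivAt hF hx hy hz)).congr_left
      fun i => ?_)
  rw [map_sub, hinv.inverse_apply_self, Pi.sub_apply]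

end PartialDerivative

theorem exists_contDiffOn_ball_eq_iff_eq {𝕜 X E G : Type*} [RCLike 𝕜]
    [NormedAddCommGroup X] [NormedSpace 𝕜 X] [CompleteSpace X]
    [NormedAddCommGroup E] [NormedSpace 𝕜 E] [CompleteSpace E]
    [NormedAddCommGroup G] [NormedSpace 𝕜 G] [CompleteSpace G]
    {k : ℕ∞ω} {F : X × E → G} {a : X} {b : E} (hF : ContDiffAt 𝕜 k F (a, b))
    (hk : k ≠ 0) (hk_top : k ≠ ∞) (hinv : (fderiv 𝕜 F (a, b) ∘L .inr 𝕜 X E).IsInvertible) :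
    ∃ ε > 0, ∃ h : X → E, ContDiffOn 𝕜 k h (ball a ε) ∧ h a = b ∧
      ∀ x ∈ ball a ε, ∀ y ∈ ball b ε, (F (x, y) = F (a, b) ↔ y = h x) := by
  have hsmooth := (hF.contDiffAt_implicitFunction hk hinv).eventually hk_top
  obtain ⟨r, hr, hr_smooth⟩ := eventually_nhds_iff_ball.mp hsmooth
  obtain ⟨s, hs, hs_iff⟩ := eventually_nhds_iff_ball.mp
    (hF.eventually_apply_eq_iff_implicitFunction hk hinv)
  refine ⟨min r s, lt_min hr hs, hF.implicitFunction hk hinv, ?_,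
    hF.implicitFunction_apply_self hk hinv, ?_⟩
  · exact fun x hx =>
      (hr_smooth x (ball_subset_ball (min_le_left r s) hx)).contDiffWithinAt
  · intro x hx y hy
    have hxy : (x, y) ∈ ball (a, b) s := by
      rw [← ball_prod_same]
      exact Set.mk_mem_prod (ball_subset_ball (min_le_right r s) hx)
        (ball_subset_ball (min_le_right r s) hy)
    rw [hs_iff (x, y) hxy, eq_comm]

section Curve

variable {E G : Type*} [NormedAddCommGroup E] [NormedSpace ℝ E]
  [NormedAddCommGroup G] [NormedSpace ℝ G] {n : ℕ} {F : ℝ × E → G} {a : ℝ} {b : E}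

theorem tendsto_inv_pow_smul_sub_of_eventually_eq_zero {F' : ℝ × E →L[ℝ] G} {h : ℝ → E}
    (hF : HasStrictFDerivAt F F' (a, b)) (hinv : (F' ∘L .inr ℝ ℝ E).IsInvertible)
    (hslice : ContDiffAt ℝ n (fun x => F (x, b)) a)
    (hzero : ∀ j < n, iteratedDeriv j (fun x => F (x, b)) a = 0)
    (hh : Tendsto h (𝓝[≠] a) (𝓝 b)) (hroot : ∀ᶠ x in 𝓝[≠] a, F (x, h x) = 0) :
    Tendsto (fun x => ((x - a) ^ n)⁻¹ • (h x - b)) (𝓝[≠] a)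
      (𝓝 (-((n ! : ℝ)⁻¹ • (F' ∘L .inr ℝ ℝ E).inverse
        (iteratedDeriv n (fun x => F (x, b)) a)))) := by
  set L := F' ∘L .inr ℝ ℝ E
  have htaylor := (L.inverse.continuous.tendsto _).comp
    (tendsto_inv_pow_smul_of_iteratedDeriv_eq_zero hslice hzero)
  have hequiv : (fun x => h x - b) ~[𝓝[≠] a] fun x => -L.inverse (F (x, b)) := by
    refine (isEquivalent_inverse_sub_of_hasStrictFDerivAt hF hinv
      (tendsto_id.mono_left nhdsWithin_le_nhds) hh tendsto_const_nhds).congr_right ?_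
    filter_upwards [hroot] with x hx
    rw [id, hx, zero_sub, map_neg]
  have hscaled := (IsEquivalent.refl (u := fun x => ((x - a) ^ n)⁻¹)).smul hequiv
  refine hscaled.tendsto_nhds_iff.mpr ?_
  simpa only [Function.comp_def, map_smul, smul_neg] using htaylor.neg

theorem stmt_11_general [CompleteSpace E] [CompleteSpace G] {k : ℕ∞ω}
    (hF : ContDiffAt ℝ k F (a, b)) (hk : k ≠ 0) (hk_top : k ≠ ∞) (hn : n ≤ k)
    (h0 : F (a, b) = 0)
    (hinv : (fderiv ℝ F (a, b) ∘L .inr ℝ ℝ E).IsInvertible)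
    (hzero : ∀ j, 1 ≤ j → j < n → iteratedDeriv j (fun x => F (x, b)) a = 0) :
    ∃ ε > 0, ∃ h : ℝ → E, ContDiffOn ℝ k h (ball a ε) ∧ h a = b ∧
      (∀ x ∈ ball a ε, ∀ y ∈ ball b ε, (F (x, y) = 0 ↔ y = h x)) ∧
      Tendsto (fun x => ((x - a) ^ n)⁻¹ • (h x - b)) (𝓝[≠] a)
        (𝓝 (-((n ! : ℝ)⁻¹ • (fderiv ℝ F (a, b) ∘L .inr ℝ ℝ E).inverse
          (iteratedDeriv n (fun x => F (x, b)) a)))) := by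
  obtain ⟨ε, hε, h, hsmooth, hself, hiff⟩ :=
    exists_contDiffOn_ball_eq_iff_eq hF hk hk_top hinv
  rw [h0] at hiff
  have ha : ball a ε ∈ 𝓝 a := ball_mem_nhds a hε
  have hh : Tendsto h (𝓝 a) (𝓝 b) := hself ▸ (hsmooth.continuousOn.continuousAt ha).tendsto
  have hroot : ∀ᶠ x in 𝓝 a, F (x, h x) = 0 := by
    filter_upwards [ha, hh (ball_mem_nhds b hε)] with x hx hhx
    exact (hiff x hx (h x) hhx).mpr rfl
  have hzero' : ∀ j < n, iteratedDeriv j (fun x => F (x, b)) a = 0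
    | 0, _ => by rwa [iteratedDeriv_zero]
    | j + 1, hj => hzero (j + 1) (Nat.le_add_left 1 j) hj
  have hslice : ContDiffAt ℝ n (fun x => F (x, b)) a :=
    (hF.comp a (contDiffAt_id.prodMk contDiffAt_const)).of_le hn
  exact ⟨ε, hε, h, hsmooth, hself, hiff, tendsto_inv_pow_smul_sub_of_eventually_eq_zero
    (hF.hasStrictFDerivAt hk) hinv hslice hzero'
    (hh.mono_left nhdsWithin_le_nhds) (hroot.filter_mono nhdsWithin_le_nhds)⟩

end Curve

section Scalar

variable {𝕜 : Type*} [NontriviallyNormedField 𝕜] {L : 𝕜 →L[𝕜] 𝕜}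

theorem isInvertible_of_apply_one_ne_zero (hL : L 1 ≠ 0) : L.IsInvertible :=
  ⟨.unitsEquivAut 𝕜 (.mk0 (L 1) hL), by ext; simp⟩

theorem inverse_apply_eq_div_apply_one (hL : L 1 ≠ 0) (y : 𝕜) : L.inverse y = y / L 1 := by
  rw [(isInvertible_of_apply_one_ne_zero hL).inverse_apply_eq, ← mul_one (y / L 1),
    ← smul_eq_mul, map_smul, smul_eq_mul, div_mul_cancel₀ y hL]

end Scalar

theorem stmt_11 (k : ℕ) (hk : 2 ≤ k) (α₀ β₀ : ℝ) (F : ℝ × ℝ → ℝ)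
    (hF : ContDiffAt ℝ k F (α₀, β₀))
    (h0 : F (α₀, β₀) = 0)
    (hβ : fderiv ℝ F (α₀, β₀) (0, 1) ≠ 0)
    (hj : ∀ j : ℕ, 1 ≤ j → j ≤ k - 2 → iteratedDeriv j (fun α => F (α, β₀)) α₀ = 0)
    (hk1 : iteratedDeriv (k - 1) (fun α => F (α, β₀)) α₀ ≠ 0) :
    ∃ ε > (0 : ℝ), ∃ h : ℝ → ℝ,
      ContDiffOn ℝ k h (Set.Ioo (α₀ - ε) (α₀ + ε)) ∧
      h α₀ = β₀ ∧
      (∀ α β : ℝ, |α - α₀| < ε → |β - β₀| < ε → (F (α, β) = 0 ↔ β = h α)) ∧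
      Filter.Tendsto (fun α => (h α - β₀) / (α - α₀) ^ (k - 1)) (nhdsWithin α₀ {α₀}ᶜ)
        (nhds (-(iteratedDeriv (k - 1) (fun α => F (α, β₀)) α₀)
          / (((k - 1).factorial : ℝ) * fderiv ℝ F (α₀, β₀) (0, 1)))) := by
  obtain ⟨ε, hε, h, hsmooth, hself, hiff, hlim⟩ := stmt_11_general (n := k - 1) hF
    (by exact_mod_cast (by lia : k ≠ 0)) (by simp) (by exact_mod_cast Nat.sub_le k 1) h0
    (isInvertible_of_apply_one_ne_zero hβ) fun j hj1 hjk => hj j hj1 (by lia)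
  rw [inverse_apply_eq_div_apply_one hβ] at hlim
  refine ⟨ε, hε, h, Real.ball_eq_Ioo α₀ ε ▸ hsmooth, hself,
    fun α β hα hβε => hiff α hα β hβε, ?_⟩
  convert hlim using 2
  · rw [smul_eq_mul, div_eq_inv_mul]
  · rw [ContinuousLinearMap.comp_apply, ContinuousLinearMap.inr_apply, smul_eq_mul]
    field_simp
end

section
/- Let a ∈ (0, 1/4), r = √a, Ω = Ω(a) = (1−a)/(1−3a), B = B(a) = (1/2)((1+a)/(1−3a))², and define the 2π-periodic real-analytic function y(α) := −4r(cos α + r)/(1 + 2r·cos α + r²). Then for every α ∈ ℝ: (1/2)·(1 + Ω·(y(α) + y(α)·H(y')(α) − H(y·y')(α)))² = B·((1 + H(y')(α))² + y'(α)²), where y' = dy/dα. That is, y solves the infinite-depth Babenko-type equation with gravity G = 0, vorticity parameter Ω(a), and Bernoulli constant B(a). -/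
/-- `g` is the periodic Hilbert transform of `f`: both are given by a common (absolutely
summable) family of Fourier coefficients `c`, with `g` obtained from `f` by the Fourier
multiplier `−i·sgn(n)`. -/
def IsHilbertPair (f g : ℝ → ℝ) : Prop :=
  ∃ c : ℤ → ℂ,
    (∀ θ : ℝ, HasSum (fun n : ℤ => c n * Complex.exp ((n : ℂ) * (θ : ℂ) * Complex.I))
      ((f θ : ℂ))) ∧
    (∀ θ : ℝ, HasSum (fun n : ℤ =>
      (-Complex.I * ((Int.sign n : ℤ) : ℂ)) * (c n * Complex.exp ((n : ℂ) * (θ : ℂ) * Complex.I)))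
      ((g θ : ℂ)))


/-!
Put `z = exp (iθ)` and `u = 1 / (1 + r z)` with `r = √a`. If `p` is a polynomial with `p(1)` real,
then `p(u)` is a power series in `z` with real constant term `p(1)`, so `Im p(u)` is the Hilbert
transform of `Re p(u)`. The profile is `y = 4 Re u - 4`, whence `y' = 4 Im (u - u²)`. The identity
`(1 - r²) |u|² = 2 Re u - 1` turns `y y'` into the imaginary part of a cubic in `u`. Both sides of
the equation then become the same multiple of `|1 - 2u|⁴`, because `1 - 4(u - u²) = (1 - 2u)²`.
-/

open Complex ComplexConjugate Polynomial MeasureTheory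

lemma fourierCoeff_eq_of_hasSum {T : ℝ} [Fact (0 < T)] {c : ℤ → ℂ} {f : AddCircle T → ℂ}
    (hf : ∀ x, HasSum (fun n => c n * fourier n x) (f x)) (m : ℤ) : fourierCoeff f m = c m := by
  have hc : Summable fun n => ‖c n‖ := by
    simpa using (hf 0).summable.norm
  have hnorm (n : ℤ) (x : AddCircle T) : ‖fourier (-m) x • (c n * fourier n x)‖ = ‖c n‖ := by
    simp only [fourier_apply, smul_eq_mul, norm_mul, Circle.norm_coe, one_mul, mul_one]
  have hterm (n : ℤ) :
      fourierCoeff (fun x : AddCircle T => c n * fourier n x) m = if n = m then c m else 0 := by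
    rw [fourierCoeff.const_mul, fourierCoeff_fourier, Pi.single_apply]
    rcases eq_or_ne n m with rfl | hn
    · rw [if_pos rfl, if_pos rfl, mul_one]
    · rw [if_neg hn, if_neg hn.symm, mul_zero]
  have hsum : HasSum (fun n => fourierCoeff (fun x : AddCircle T => c n * fourier n x) m)
      (fourierCoeff f m) := by
    have hcont (n : ℤ) :
        Continuous fun x : AddCircle T => fourier (-m) x • (c n * fourier n x) := by fun_prop
    have hint := hasSum_integral_of_summable_integral_norm (μ := AddCircle.haarAddCircle)
      (fun n => (hcont n).integrable_of_hasCompactSupport (HasCompactSupport.of_compactSpace _))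
      (by simpa only [hnorm, integral_const, probReal_univ, one_smul] using hc)
    simp only [((hf _).const_smul _).tsum_eq] at hint
    exact hint
  simp only [hterm] at hsum
  exact hsum.unique (hasSum_ite_eq m (c m))

lemma IsHilbertPair.unique {f g g' : ℝ → ℝ} (h : IsHilbertPair f g) (h' : IsHilbertPair f g') :
    g = g' := by
  obtain ⟨c, hf, hg⟩ := h
  obtain ⟨c', hf', hg'⟩ := h'
  have : Fact (0 < 2 * Real.pi) := ⟨Real.two_pi_pos⟩
  have hdiff (x : AddCircle (2 * Real.pi)) :
      HasSum (fun n : ℤ => (c n - c' n) * fourier n x) 0 := by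
    induction x using QuotientAddGroup.induction_on with
    | H θ =>
      convert! (hf θ).sub (hf' θ) using 1
      · funext n
        rw [fourier_coe_apply, ← sub_mul]
        congr 2
        push_cast
        field_simp
      · simp
  obtain rfl : c = c' := by
    funext m
    have := fourierCoeff_eq_of_hasSum hdiff m
    simpa [fourierCoeff, sub_eq_zero, eq_comm] using this
  funext θ
  exact_mod_cast (hg θ).unique (hg' θ)

lemma hasSum_int_extend {b : ℕ → ℂ} {θ : ℝ} {w : ℂ}
    (h : HasSum (fun n => b n * exp (θ * I) ^ n) w) :
    HasSum (fun n : ℤ => Function.extend Nat.cast b 0 n * exp (n * θ * I)) w := by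
  rw [← Function.Injective.hasSum_iff Nat.cast_injective (fun n hn => by
    rw [Function.extend_apply' _ _ _ hn, Pi.zero_apply, zero_mul])]
  convert! h using 2 with n
  rw [Function.comp_apply, Nat.cast_injective.extend_apply, ← exp_nat_mul, mul_assoc]
  push_cast
  rfl

lemma isHilbertPair_re_im_of_hasSum {b : ℕ → ℂ} {Φ : ℝ → ℂ} (hb : (b 0).im = 0)
    (hΦ : ∀ θ : ℝ, HasSum (fun n => b n * exp (θ * I) ^ n) (Φ θ)) :
    IsHilbertPair (fun θ => (Φ θ).re) (fun θ => (Φ θ).im) := by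
  set B : ℤ → ℂ := Function.extend Nat.cast b 0
  have hpos (θ : ℝ) : HasSum (fun n : ℤ => B n * exp (n * θ * I)) (Φ θ) :=
    hasSum_int_extend (hΦ θ)
  have hneg (θ : ℝ) : HasSum (fun n : ℤ => conj (B (-n)) * exp (n * θ * I)) (conj (Φ θ)) := by
    have := (Equiv.neg ℤ).hasSum_iff.mpr (hasSum_conj'.mpr (hpos θ))
    convert! this using 2 with n
    simp [← exp_conj]
  -- The two families are supported on `0 ≤ n` and `n ≤ 0`, and agree at `n = 0`.
  have hsign (n : ℤ) : -I * (n.sign : ℂ) * ((B n + conj (B (-n))) / 2) =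
      (B n - conj (B (-n))) / (2 * I) := by
    rcases lt_trichotomy n 0 with hn | rfl | hn
    · have hBn : B n = 0 := Function.extend_apply' _ _ _ (by rintro ⟨k, rfl⟩; lia)
      rw [Int.sign_eq_neg_one_of_neg hn, hBn]
      field_simp
      simp
    · have hB0 : conj (B 0) = B 0 := by
        have hBb : B 0 = b 0 := Nat.cast_injective.extend_apply b 0 0
        rw [hBb, conj_eq_iff_im, hb]
      simp [hB0]
    · have hBn : B (-n) = 0 := Function.extend_apply' _ _ _ (by rintro ⟨k, hk⟩; lia)
      rw [Int.sign_eq_one_of_pos hn, hBn]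
      field_simp
      simp
  refine ⟨fun n => (B n + conj (B (-n))) / 2, fun θ => ?_, fun θ => ?_⟩
  · rw [re_eq_add_conj]
    convert! ((hpos θ).add (hneg θ)).div_const 2 using 2
    ring
  · rw [im_eq_sub_conj]
    convert! ((hpos θ).sub (hneg θ)).div_const (2 * I) using 2 with n
    rw [← mul_assoc, hsign]
    ring

/-- The Cauchy kernel `1 / (1 + r z)` restricted to the unit circle `z = exp (i θ)`, in whose powers
the wave profile, its derivative and their Hilbert transforms are expanded. -/
noncomputable def cauchyKernel (r : ℂ) (θ : ℝ) : ℂ := (1 + r * exp (θ * I))⁻¹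

section

variable {r : ℂ}

lemma one_add_mul_exp_ne_zero (hr : ‖r‖ < 1) (θ : ℝ) : 1 + r * exp (θ * I) ≠ 0 := by
  intro h
  have hnorm : ‖r * exp (θ * I)‖ = 1 := by
    rw [eq_neg_of_add_eq_zero_right h, norm_neg, norm_one]
  rw [norm_mul, norm_exp_ofReal_mul_I, mul_one] at hnorm
  exact hr.ne hnorm

lemma hasDerivAt_cauchyKernel (hr : ‖r‖ < 1) (θ : ℝ) :
    HasDerivAt (cauchyKernel r) (-I * (cauchyKernel r θ - cauchyKernel r θ ^ 2)) θ := by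
  have hne := one_add_mul_exp_ne_zero hr θ
  have hexp : HasDerivAt (fun t : ℝ => 1 + r * exp (t * I)) (r * (exp (θ * I) * I)) θ := by
    simpa using ((((hasDerivAt_id θ).ofReal_comp.mul_const I).cexp).const_mul r).const_add 1
  convert! hexp.fun_inv hne using 1
  rw [cauchyKernel]
  field_simp
  ring

lemma one_sub_normSq_pos (hr : ‖r‖ < 1) : 0 < 1 - normSq r := by
  rw [normSq_eq_norm_sq, sub_pos]
  exact pow_lt_one₀ (norm_nonneg r) hr two_ne_zero

lemma normSq_cauchyKernel (hr : ‖r‖ < 1) (θ : ℝ) :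
    normSq (cauchyKernel r θ) = (1 - normSq r)⁻¹ * (2 * (cauchyKernel r θ).re - 1) := by
  have hmul : r * exp (θ * I) * cauchyKernel r θ = 1 - cauchyKernel r θ := by
    rw [eq_sub_iff_add_eq', ← one_add_mul, cauchyKernel,
      mul_inv_cancel₀ (one_add_mul_exp_ne_zero hr θ)]
  have hexp : normSq (exp (θ * I)) = 1 := by
    rw [normSq_eq_norm_sq, norm_exp_ofReal_mul_I, one_pow]
  have hsq := congrArg normSq hmul
  rw [map_mul, map_mul, hexp, normSq_sub, normSq_one, one_mul, conj_re] at hsq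
  rw [eq_inv_mul_iff_mul_eq₀ (one_sub_normSq_pos hr).ne']
  linarith

lemma hasSum_cauchyKernel_pow_succ (hr : ‖r‖ < 1) (k : ℕ) (θ : ℝ) :
    HasSum (fun n => ((n + k).choose k * (-r) ^ n) * exp (θ * I) ^ n)
      (cauchyKernel r θ ^ (k + 1)) := by
  have hz : ‖-r * exp (θ * I)‖ < 1 := by
    rwa [norm_mul, norm_exp_ofReal_mul_I, norm_neg, mul_one]
  convert! hasSum_choose_mul_geometric_of_norm_lt_one k hz using 1
  · simp only [mul_pow, mul_assoc]
  · rw [cauchyKernel, neg_mul, sub_neg_eq_add, inv_pow, one_div]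

lemma exists_hasSum_eval_cauchyKernel (hr : ‖r‖ < 1) (p : ℂ[X]) :
    ∃ b : ℕ → ℂ, b 0 = p.eval 1 ∧
      ∀ θ : ℝ, HasSum (fun n => b n * exp (θ * I) ^ n) (p.eval (cauchyKernel r θ)) := by
  induction p using Polynomial.induction_on' with
  | add p q hp hq =>
    obtain ⟨b, hb, hbsum⟩ := hp
    obtain ⟨c, hc, hcsum⟩ := hq
    exact ⟨b + c, by simp [hb, hc], fun θ => by
      simpa [add_mul] using (hbsum θ).add (hcsum θ)⟩
  | monomial k a =>
    cases k with
    | zero =>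
      refine ⟨Pi.single 0 a, by simp, fun θ => ?_⟩
      convert! hasSum_single (f := fun n => Pi.single (M := fun _ => ℂ) 0 a n * exp (θ * I) ^ n) 0
        (fun n hn => by simp [hn]) using 1
      simp
    | succ k =>
      refine ⟨fun n => a * ((n + k).choose k * (-r) ^ n), by simp, fun θ => ?_⟩
      simpa [mul_assoc] using (hasSum_cauchyKernel_pow_succ hr k θ).mul_left a

lemma isHilbertPair_re_im_eval_cauchyKernel (hr : ‖r‖ < 1) {p : ℂ[X]}
    (hp : (p.eval 1).im = 0) :
    IsHilbertPair (fun θ => (p.eval (cauchyKernel r θ)).re)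
      (fun θ => (p.eval (cauchyKernel r θ)).im) := by
  obtain ⟨b, hb, hsum⟩ := exists_hasSum_eval_cauchyKernel hr p
  exact isHilbertPair_re_im_of_hasSum (by rw [hb, hp]) hsum

lemma isHilbertPair_im_neg_re_eval_cauchyKernel (hr : ‖r‖ < 1) {p : ℂ[X]}
    (hp : (p.eval 1).re = 0) :
    IsHilbertPair (fun θ => (p.eval (cauchyKernel r θ)).im)
      (fun θ => -(p.eval (cauchyKernel r θ)).re) := by
  have hp' : ((C (-I) * p).eval 1).im = 0 := by simp [hp]
  simpa using isHilbertPair_re_im_eval_cauchyKernel hr hp'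

/-- The Hur–Wheeler surface elevation `Im w(exp (-iθ))` with `r` in place of `√a`, written through
the Cauchy kernel; the argument of a complex `r` only translates the profile. -/
noncomputable def elevation (r : ℂ) (θ : ℝ) : ℝ := 4 * (cauchyKernel r θ).re - 4

lemma elevation_ofReal {s : ℝ} (hs : |s| < 1) (θ : ℝ) :
    elevation s θ = -4 * s * (Real.cos θ + s) / (1 + 2 * s * Real.cos θ + s ^ 2) := by
  have hne := one_add_mul_exp_ne_zero (r := s) (by simpa using hs) θ
  have hre : (1 + s * exp (θ * I)).re = 1 + s * Real.cos θ := by simp [exp_ofReal_mul_I_re]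
  have hsq : normSq (1 + s * exp (θ * I)) = 1 + 2 * s * Real.cos θ + s ^ 2 := by
    rw [normSq_apply, hre]
    simp only [add_im, one_im, im_ofReal_mul, exp_ofReal_mul_I_im, zero_add]
    linear_combination s ^ 2 * Real.sin_sq_add_cos_sq θ
  have hden : 1 + 2 * s * Real.cos θ + s ^ 2 ≠ 0 := hsq ▸ normSq_eq_zero.not.mpr hne
  rw [elevation, cauchyKernel, inv_re, hre, hsq, eq_div_iff hden, sub_mul, mul_assoc,
    div_mul_cancel₀ _ hden]
  ring

lemma deriv_elevation (hr : ‖r‖ < 1) (θ : ℝ) :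
    deriv (elevation r) θ = 4 * (cauchyKernel r θ - cauchyKernel r θ ^ 2).im := by
  have hre := reCLM.hasFDerivAt.comp_hasDerivAt θ (hasDerivAt_cauchyKernel hr θ)
  refine ((hre.const_mul 4).sub_const 4).deriv.trans ?_
  simp

lemma isHilbertPair_deriv_elevation (hr : ‖r‖ < 1) :
    IsHilbertPair (deriv (elevation r))
      (fun θ => -4 * (cauchyKernel r θ - cauchyKernel r θ ^ 2).re) := by
  have h := isHilbertPair_im_neg_re_eval_cauchyKernel hr (p := C 4 * (X - X ^ 2)) (by simp)
  convert! h using 2 with θ θ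
  · simp [deriv_elevation hr]
  · simp

lemma elevation_mul_deriv (hr : ‖r‖ < 1) (θ : ℝ) :
    elevation r θ * deriv (elevation r) θ =
      8 * ((cauchyKernel r θ - cauchyKernel r θ ^ 2) *
        (cauchyKernel r θ - 2 + ((1 - normSq r)⁻¹ : ℝ))).im := by
  have hnormSq := normSq_cauchyKernel hr θ
  rw [normSq_apply] at hnormSq
  rw [deriv_elevation hr, elevation]
  simp only [pow_two, add_re, add_im, sub_re, sub_im, mul_re, mul_im, ofReal_re, ofReal_im,
    re_ofNat, im_ofNat]
  linear_combination (-8) * (cauchyKernel r θ).im * hnormSq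

lemma isHilbertPair_elevation_mul_deriv (hr : ‖r‖ < 1) :
    IsHilbertPair (fun θ => elevation r θ * deriv (elevation r) θ)
      (fun θ => -8 * ((cauchyKernel r θ - cauchyKernel r θ ^ 2) *
        (cauchyKernel r θ - 2 + ((1 - normSq r)⁻¹ : ℝ))).re) := by
  have h := isHilbertPair_im_neg_re_eval_cauchyKernel hr
    (p := C 8 * ((X - X ^ 2) * (X - 2 + C (((1 - normSq r)⁻¹ : ℝ) : ℂ)))) (by simp)
  convert! h using 2 with θ θ
  · simp [elevation_mul_deriv hr]
  · simp

lemma one_sub_sq_add_sq_eq_normSq_sq (u : ℂ) :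
    (1 + -4 * (u - u ^ 2).re) ^ 2 + (4 * (u - u ^ 2).im) ^ 2 = normSq (1 - 2 * u) ^ 2 := by
  have hsq : (1 + -4 * (u - u ^ 2).re) ^ 2 + (4 * (u - u ^ 2).im) ^ 2 =
      normSq (1 - 4 * (u - u ^ 2)) := by
    simp only [normSq_apply, sub_re, sub_im, mul_re, mul_im, one_re, one_im, re_ofNat, im_ofNat]
    ring
  rw [hsq, ← map_pow]
  congr 1
  ring

lemma one_add_Om_mul_elevation (hr : ‖r‖ < 1) (hr3 : 1 - 3 * normSq r ≠ 0) (θ : ℝ) :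
    1 + Om (normSq r) * (elevation r θ +
      elevation r θ * (-4 * (cauchyKernel r θ - cauchyKernel r θ ^ 2).re) -
      -8 * ((cauchyKernel r θ - cauchyKernel r θ ^ 2) *
        (cauchyKernel r θ - 2 + ((1 - normSq r)⁻¹ : ℝ))).re) =
    (1 + normSq r) / (1 - 3 * normSq r) * normSq (1 - 2 * cauchyKernel r θ) := by
  have hinv : (1 - normSq r) * (1 - normSq r)⁻¹ = 1 :=
    mul_inv_cancel₀ (one_sub_normSq_pos hr).ne'
  have hnormSq := normSq_cauchyKernel hr θ
  rw [Om, div_mul_eq_mul_div, div_mul_eq_mul_div, one_add_div hr3, div_left_inj' hr3,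
    elevation]
  generalize cauchyKernel r θ = u at *
  generalize (1 - normSq r)⁻¹ = k at *
  have hcancel : 4 * u.re - 4 + (4 * u.re - 4) * (-4 * (u - u ^ 2).re) -
      -8 * ((u - u ^ 2) * (u - 2 + k)).re =
        4 * (u.re - 1) + 8 * (u.re - 1) * normSq u + 8 * k * (normSq u - 2 * u.re ^ 2 + u.re) := by
    simp only [pow_two, add_re, add_im, sub_re, sub_im, mul_re, mul_im, ofReal_re, ofReal_im,
      re_ofNat, im_ofNat, normSq_apply]
    ring
  have hmul : (1 - normSq r) * normSq u = 2 * u.re - 1 := by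
    rw [hnormSq, ← mul_assoc, hinv, one_mul]
  have hexpand : normSq (1 - 2 * u) = 4 * normSq u - 4 * u.re + 1 := by
    simp only [normSq_apply, sub_re, sub_im, mul_re, mul_im, re_ofNat, im_ofNat, one_re, one_im]
    ring
  rw [hcancel, hexpand]
  linear_combination (8 * u.re - 4) * hmul + 8 * (normSq u - 2 * u.re ^ 2 + u.re) * hinv

end

theorem stmt_16_general (a : ℝ) (ha : a ∈ Set.Ico (0 : ℝ) 1) (ha' : a ≠ 1 / 3)
    (y Hy' Hyy' : ℝ → ℝ)
    (hy : y = fun α => -4 * Real.sqrt a * (Real.cos α + Real.sqrt a) /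
      (1 + 2 * Real.sqrt a * Real.cos α + (Real.sqrt a) ^ 2))
    (h1 : IsHilbertPair (deriv y) Hy')
    (h2 : IsHilbertPair (fun α => y α * deriv y α) Hyy') :
    ∀ α : ℝ,
      (1 / 2) * (1 + Om a * (y α + y α * Hy' α - Hyy' α)) ^ 2
        = Bc a * ((1 + Hy' α) ^ 2 + (deriv y α) ^ 2) := by
  intro α
  have hsqrt : |√a| < 1 := by
    rw [← sq_lt_one_iff_abs_lt_one, Real.sq_sqrt ha.1]
    exact ha.2
  have hr : ‖(√a : ℂ)‖ < 1 := by rwa [norm_real, Real.norm_eq_abs]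
  have hnormSq : normSq (√a : ℂ) = a := by rw [normSq_ofReal, Real.mul_self_sqrt ha.1]
  obtain rfl : y = elevation √a := hy.trans (funext fun θ => (elevation_ofReal hsqrt θ).symm)
  obtain rfl := h1.unique (isHilbertPair_deriv_elevation hr)
  obtain rfl := h2.unique (isHilbertPair_elevation_mul_deriv hr)
  have hden : 1 - 3 * normSq (√a : ℂ) ≠ 0 := fun h => ha' (by linarith)
  have hvorticity := one_add_Om_mul_elevation hr hden α
  rw [hnormSq] at hvorticity
  beta_reduce
  rw [hnormSq, hvorticity, deriv_elevation hr, one_sub_sq_add_sq_eq_normSq_sq, Bc]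
  ring

theorem stmt_16 (a : ℝ) (ha : a ∈ Set.Ioo (0 : ℝ) (1 / 4))
    (y Hy' Hyy' : ℝ → ℝ)
    (hy : y = fun α => -4 * Real.sqrt a * (Real.cos α + Real.sqrt a) /
      (1 + 2 * Real.sqrt a * Real.cos α + (Real.sqrt a) ^ 2))
    (h1 : IsHilbertPair (deriv y) Hy')
    (h2 : IsHilbertPair (fun α => y α * deriv y α) Hyy') :
    ∀ α : ℝ,
      (1 / 2) * (1 + Om a * (y α + y α * Hy' α - Hyy' α)) ^ 2
        = Bc a * ((1 + Hy' α) ^ 2 + (deriv y α) ^ 2) := by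
  exact stmt_16_general a ⟨ha.1.le, by linarith [ha.2]⟩ (by linarith [ha.2]) y Hy' Hyy' hy h1 h2
end
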